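/- In ℝ³ with standard inner product, the Coxeter root system B_3(t) = {e_i ± e_j : 1 ≤ i < j ≤ 3} ∪ {t e_i : 1 ≤ i ≤ 3} with t ≠ 0 is a V-system: for every α in the system and every 2-plane π containing α, Σ_{β∈π∩A} ⟨β,α^∨⟩ β^∨ is a scalar multiple of α^∨, where ∨ is taken with respect to the canonical form G(x,y) = Σ_α ⟨α,x⟩⟨α,y⟩. -/

import Mathlib

open Matrix
open scoped Classical


lemma pair_add {p : Submodule ℝ (Fin 3 → ℝ)} {a u v : Fin 3 → ℝ} (ha : a ∈ p) (h : u + v = a) :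
    (u ∈ p ↔ v ∈ p) := by
  subst h
  exact ⟨fun hu => (p.add_mem_iff_right hu).1 ha, fun hv => (p.add_mem_iff_left hv).1 ha⟩

lemma pair_sub {p : Submodule ℝ (Fin 3 → ℝ)} {a u v : Fin 3 → ℝ} (ha : a ∈ p) (h : u - v = a) :
    (u ∈ p ↔ v ∈ p) := by
  have : u = a + v := by rw [← h]; simp
  rw [this, p.add_mem_iff_right ha]

lemma exists_of_coord {a w : Fin 3 → ℝ} (i : Fin 3) (h : ∀ j, w j * a i = w i * a j)
    (hi : a i ≠ 0) : ∃ l : ℝ, w = l • a :=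
  ⟨w i / a i, by
    ext j
    simp only [Pi.smul_apply, smul_eq_mul]
    field_simp
    linarith [h j]⟩

lemma sum_B3 {M : Type*} [AddCommMonoid M] (t : ℝ) (ht : t ≠ 0) (f : (Fin 3 → ℝ) → M) :
    ∑ β ∈ ({![1, 1, 0], ![1, -1, 0], ![1, 0, 1], ![1, 0, -1], ![0, 1, 1], ![0, 1, -1],
      t • ![1, 0, 0], t • ![0, 1, 0], t • ![0, 0, 1]} : Finset (Fin 3 → ℝ)), f β =
    f ![1, 1, 0] + (f ![1, -1, 0] + (f ![1, 0, 1] + (f ![1, 0, -1] + (f ![0, 1, 1] +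
      (f ![0, 1, -1] + (f (t • ![1, 0, 0]) + (f (t • ![0, 1, 0]) + f (t • ![0, 0, 1])))))))) := by
  have h2 : (1 : ℝ) ≠ -1 := by norm_num
  have h3 : (-1 : ℝ) ≠ 1 := by norm_num
  rw [Finset.sum_insert, Finset.sum_insert, Finset.sum_insert, Finset.sum_insert,
    Finset.sum_insert, Finset.sum_insert, Finset.sum_insert, Finset.sum_insert,
    Finset.sum_singleton]
  all_goals simp [funext_iff, Fin.forall_fin_succ, ht, ht.symm, h2, h3]

set_option maxHeartbeats 1000000 in
/-- The Coxeter root system `B_3(t) = {e_i ± e_j (i<j), t e_i}` in `ℝ³`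
(`t ≠ 0`) is a `∨`-system: for every `α` in the system and every 2-plane `π ∋ α`,
`∑ β ∈ π∩A, ⟨β, α^∨⟩ β^∨` is a scalar multiple of `α^∨`, where `α^∨` is the dual of `α`
with respect to the canonical form `G(x,y) = ∑ α, ⟨α,x⟩⟨α,y⟩`. -/
theorem B3t_is_vee_system
    (t : ℝ) (ht : t ≠ 0)
    (A : Finset (Fin 3 → ℝ))
    (hA : A = {![1, 1, 0], ![1, -1, 0], ![1, 0, 1], ![1, 0, -1], ![0, 1, 1], ![0, 1, -1],
      t • ![1, 0, 0], t • ![0, 1, 0], t • ![0, 0, 1]})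
    (G : (Fin 3 → ℝ) → (Fin 3 → ℝ) → ℝ)
    (hG : ∀ x y, G x y = ∑ α ∈ A, (α ⬝ᵥ x) * (α ⬝ᵥ y))
    (vee : (Fin 3 → ℝ) → (Fin 3 → ℝ))
    (hvee : ∀ α y, G (vee α) y = α ⬝ᵥ y) :
    ∀ α ∈ A, ∀ π : Submodule ℝ (Fin 3 → ℝ),
      Module.finrank ℝ π = 2 → α ∈ π → ∃ lam : ℝ,
        ∑ β ∈ A.filter (· ∈ π), (β ⬝ᵥ vee α) • vee β = lam • vee α := by
  have hc : (4 + t ^ 2) ≠ 0 := by positivity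
  have hv : ∀ a, vee a = (4 + t ^ 2)⁻¹ • a := by
    intro a
    have key : ∀ y, (4 + t ^ 2) * (vee a ⬝ᵥ y) = a ⬝ᵥ y := by
      intro y
      rw [← hvee a y, hG, hA, sum_B3 t ht]
      simp [dotProduct, Fin.sum_univ_three]
      ring
    ext i
    have := key (Pi.single i 1)
    simp only [dotProduct_single_one] at this
    simp only [Pi.smul_apply, smul_eq_mul]
    rw [← this]
    field_simp
  intro α hα π _ hπ
  suffices h : ∃ l : ℝ, ∑ β ∈ A.filter (· ∈ π), (β ⬝ᵥ α) • β = l • α by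
    obtain ⟨l, hl⟩ := h
    refine ⟨l * (4 + t ^ 2)⁻¹, ?_⟩
    simp only [hv, dotProduct_smul, smul_eq_mul]
    calc _ = ((4 + t ^ 2)⁻¹ * (4 + t ^ 2)⁻¹) • ∑ β ∈ A.filter (· ∈ π), (β ⬝ᵥ α) • β := by
          rw [Finset.smul_sum]
          refine Finset.sum_congr rfl fun β _ => ?_
          simp only [smul_smul]
          congr 1
          ring
      _ = _ := by
          rw [hl]
          simp only [smul_smul]
          congr 1
          ring
  have hs : ∀ x, t • x ∈ π ↔ x ∈ π := fun x => π.smul_mem_iff ht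
  obtain ⟨c, hc1, hc2⟩ : ∃ c : (Fin 3 → ℝ) → ℝ, (∀ u v, (u ∈ π ↔ v ∈ π) → c u = c v) ∧
      ∀ β x : Fin 3 → ℝ, (if β ∈ π then x else 0) = c β • x :=
    ⟨fun β => if β ∈ π then 1 else 0, fun u v h => by simp only [h], fun β x => by simp⟩
  have hcs : ∀ x, c (t • x) = c x := fun x => hc1 _ _ (hs x)
  rw [Finset.sum_filter, hA, sum_B3 t ht]
  simp only [hc2, hcs]
  rw [hA] at hα
  simp only [Finset.mem_insert, Finset.mem_singleton] at hα
  rcases hα with rfl | rfl | rfl | rfl | rfl | rfl | rfl | rfl | rfl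
  · have h0 : ![1, 1, 0] ∈ π := hπ
    have h1 : c ![1, 0, 1] = c ![0, 1, -1] :=
      hc1 _ _ (pair_add h0 (by ext j; fin_cases j <;> norm_num))
    have h2 : c ![1, 0, -1] = c ![0, 1, 1] :=
      hc1 _ _ (pair_add h0 (by ext j; fin_cases j <;> norm_num))
    have h3 : c ![1, 0, 0] = c ![0, 1, 0] :=
      hc1 _ _ (pair_add h0 (by ext j; fin_cases j <;> norm_num))
    refine exists_of_coord 0 ?_ (by simp [ht])
    simp only [h1, h2, h3]
    intro j
    fin_cases j <;> simp [dotProduct, Fin.sum_univ_three] <;> ring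
  · have h0 : ![1, -1, 0] ∈ π := hπ
    have h1 : c ![1, 0, 1] = c ![0, 1, 1] :=
      hc1 _ _ (pair_sub h0 (by ext j; fin_cases j <;> norm_num))
    have h2 : c ![1, 0, -1] = c ![0, 1, -1] :=
      hc1 _ _ (pair_sub h0 (by ext j; fin_cases j <;> norm_num))
    have h3 : c ![1, 0, 0] = c ![0, 1, 0] :=
      hc1 _ _ (pair_sub h0 (by ext j; fin_cases j <;> norm_num))
    refine exists_of_coord 0 ?_ (by simp [ht])
    simp only [h1, h2, h3]
    intro j
    fin_cases j <;> simp [dotProduct, Fin.sum_univ_three] <;> ring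
  · have h0 : ![1, 0, 1] ∈ π := hπ
    have h1 : c ![1, 1, 0] = c ![0, 1, -1] :=
      hc1 _ _ (pair_sub h0 (by ext j; fin_cases j <;> norm_num))
    have h2 : c ![1, -1, 0] = c ![0, 1, 1] :=
      hc1 _ _ (pair_add h0 (by ext j; fin_cases j <;> norm_num))
    have h3 : c ![1, 0, 0] = c ![0, 0, 1] :=
      hc1 _ _ (pair_add h0 (by ext j; fin_cases j <;> norm_num))
    refine exists_of_coord 0 ?_ (by simp [ht])
    simp only [h1, h2, h3]
    intro j
    fin_cases j <;> simp [dotProduct, Fin.sum_univ_three] <;> ring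
  · have h0 : ![1, 0, -1] ∈ π := hπ
    have h1 : c ![1, 1, 0] = c ![0, 1, 1] :=
      hc1 _ _ (pair_sub h0 (by ext j; fin_cases j <;> norm_num))
    have h2 : c ![1, -1, 0] = c ![0, 1, -1] :=
      hc1 _ _ (pair_add h0 (by ext j; fin_cases j <;> norm_num))
    have h3 : c ![1, 0, 0] = c ![0, 0, 1] :=
      hc1 _ _ (pair_sub h0 (by ext j; fin_cases j <;> norm_num))
    refine exists_of_coord 0 ?_ (by simp [ht])
    simp only [h1, h2, h3]
    intro j
    fin_cases j <;> simp [dotProduct, Fin.sum_univ_three] <;> ring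
  · have h0 : ![0, 1, 1] ∈ π := hπ
    have h1 : c ![1, 1, 0] = c ![1, 0, -1] :=
      hc1 _ _ (pair_sub h0 (by ext j; fin_cases j <;> norm_num))
    have h2 : c ![1, -1, 0] = c ![1, 0, 1] :=
      hc1 _ _ ((pair_sub h0 (by ext j; fin_cases j <;> norm_num)).symm)
    have h3 : c ![0, 1, 0] = c ![0, 0, 1] :=
      hc1 _ _ (pair_add h0 (by ext j; fin_cases j <;> norm_num))
    refine exists_of_coord 1 ?_ (by simp [ht])
    simp only [h1, h2, h3]
    intro j
    fin_cases j <;> simp [dotProduct, Fin.sum_univ_three] <;> ring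
  · have h0 : ![0, 1, -1] ∈ π := hπ
    have h1 : c ![1, 1, 0] = c ![1, 0, 1] :=
      hc1 _ _ (pair_sub h0 (by ext j; fin_cases j <;> norm_num))
    have h2 : c ![1, -1, 0] = c ![1, 0, -1] :=
      hc1 _ _ ((pair_sub h0 (by ext j; fin_cases j <;> norm_num)).symm)
    have h3 : c ![0, 1, 0] = c ![0, 0, 1] :=
      hc1 _ _ (pair_sub h0 (by ext j; fin_cases j <;> norm_num))
    refine exists_of_coord 1 ?_ (by simp [ht])
    simp only [h1, h2, h3]
    intro j
    fin_cases j <;> simp [dotProduct, Fin.sum_univ_three] <;> ring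
  · have h0 : ![1, 0, 0] ∈ π := (hs _).1 hπ
    have h20 : (2 : ℝ) • ![1, 0, 0] ∈ π := π.smul_mem _ h0
    have h1 : c ![1, 1, 0] = c ![1, -1, 0] :=
      hc1 _ _ (pair_add h20 (by ext j; fin_cases j <;> norm_num))
    have h2 : c ![1, 0, 1] = c ![1, 0, -1] :=
      hc1 _ _ (pair_add h20 (by ext j; fin_cases j <;> norm_num))
    refine exists_of_coord 0 ?_ (by simp [ht])
    simp only [h1, h2]
    intro j
    fin_cases j <;> simp [dotProduct, Fin.sum_univ_three] <;> ring
  · have h0 : ![0, 1, 0] ∈ π := (hs _).1 hπ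
    have h20 : (2 : ℝ) • ![0, 1, 0] ∈ π := π.smul_mem _ h0
    have h1 : c ![1, 1, 0] = c ![1, -1, 0] :=
      hc1 _ _ (pair_sub h20 (by ext j; fin_cases j <;> norm_num))
    have h2 : c ![0, 1, 1] = c ![0, 1, -1] :=
      hc1 _ _ (pair_add h20 (by ext j; fin_cases j <;> norm_num))
    refine exists_of_coord 1 ?_ (by simp [ht])
    simp only [h1, h2]
    intro j
    fin_cases j <;> simp [dotProduct, Fin.sum_univ_three] <;> ring
  · have h0 : ![0, 0, 1] ∈ π := (hs _).1 hπ
    have h20 : (2 : ℝ) • ![0, 0, 1] ∈ π := π.smul_mem _ h0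
    have h1 : c ![1, 0, 1] = c ![1, 0, -1] :=
      hc1 _ _ (pair_sub h20 (by ext j; fin_cases j <;> norm_num))
    have h2 : c ![0, 1, 1] = c ![0, 1, -1] :=
      hc1 _ _ (pair_sub h20 (by ext j; fin_cases j <;> norm_num))
    refine exists_of_coord 2 ?_ (by simp [ht])
    simp only [h1, h2]
    intro j
    fin_cases j <;> simp [dotProduct, Fin.sum_univ_three] <;> ring
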